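/- arXiv:1206.3409 — 6 statements merged into one kernel-verified Lean document; each statement's English description precedes it below -/
import Mathlib

section
/- Let G be a connected simple graph with at least two vertices and let F be an infinite field of characteristic not 2. Then mr⁻(F,G) = 2 if and only if G is a complete multipartite graph (i.e., there is a partition of the vertex set into nonempty parts such that two vertices are adjacent if and only if they lie in different parts). -/
/-!
A matrix `A` describing `G` has zero diagonal because `2 ≠ 0`, so `A i j ≠ 0 ↔ G.Adj i j` holds
for all `i, j`. An edge gives a nonsingular `2 × 2` principal submatrix, hence `2 ≤ A.rank`
as soon as `G` has an edge.

If `G` is complete multipartite, assign a distinct scalar to each part, which is possible since `F`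
is infinite, and let `x i` be the scalar of the part of `i`. The matrix `x i - x j` describes `G` and
has rank at most `2`.

Conversely, let `A` describe `G` with rank `2`. Suppose that `b` is adjacent to neither `a` nor `c`
whereas `a` and `c` are adjacent. By connectedness `b` has a neighbour `d`, and the submatrix of `A`
on rows `a, c, b` and columns `a, c, d` has determinant `(A a c) ^ 2 * A b d ≠ 0`, contradicting
rank `2` (`not_adj_trans_of_rank_le_two`). So non-adjacency is an equivalence relation, and its
classes are the parts.
-/

open Matrix

/-- `A` is a skew-symmetric matrix over `F` whose off-diagonal zero–nonzero
pattern is described by the graph `G`. -/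
def SkewDescribes (F : Type) [Field F] {V : Type}
    (G : SimpleGraph V) (A : Matrix V V F) : Prop :=
  Aᵀ = -A ∧ ∀ i j : V, i ≠ j → (A i j ≠ 0 ↔ G.Adj i j)

/-- The minimum skew rank of a graph `G` over a field `F`. -/
noncomputable def minSkewRank (F : Type) [Field F] {V : Type} [Fintype V]
    (G : SimpleGraph V) : ℕ :=
  sInf {r : ℕ | ∃ A : Matrix V V F, SkewDescribes F G A ∧ A.rank = r}

/-- `G` is a complete multipartite graph: its vertex set is partitioned into the
(nonempty) fibres of `f`, and two vertices are adjacent iff they lie in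
different parts. -/
def IsCompleteMultipartite {V : Type} (G : SimpleGraph V) : Prop :=
  ∃ f : V → ℕ, ∀ a b : V, G.Adj a b ↔ f a ≠ f b

theorem SkewDescribes.ne_zero_iff {F : Type} [Field F] (hF : (2 : F) ≠ 0) {V : Type}
    {G : SimpleGraph V} {A : Matrix V V F} (hA : SkewDescribes F G A) (i j : V) :
    A i j ≠ 0 ↔ G.Adj i j := by
  by_cases hij : i = j
  · subst hij
    have h : A i i = - A i i := congrFun (congrFun hA.1 i) i
    have h2 : (2 : F) * A i i = 0 := by linear_combination h
    have h0 : A i i = 0 := (mul_eq_zero.1 h2).resolve_left hF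
    simp [h0]
  · exact hA.2 i j hij

theorem SkewDescribes.apply_swap {F : Type} [Field F] {V : Type}
    {G : SimpleGraph V} {A : Matrix V V F} (hA : SkewDescribes F G A) (i j : V) :
    A j i = - A i j :=
  congrFun (congrFun hA.1 i) j

theorem le_rank_of_det_submatrix_ne_zero {F : Type} [Field F] {V : Type} [Fintype V] {k : ℕ}
    (A : Matrix V V F) (r c : Fin k → V) (h : (A.submatrix r c).det ≠ 0) : k ≤ A.rank := by
  have h1 := Matrix.rank_of_det_ne_zero h
  have h2 := Matrix.rank_submatrix_le A r c
  rw [h1, Fintype.card_fin] at h2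
  exact h2

theorem SkewDescribes.two_le_rank {F : Type} [Field F] (hF : (2 : F) ≠ 0) {V : Type} [Fintype V]
    {G : SimpleGraph V} {A : Matrix V V F} (hA : SkewDescribes F G A) {p q : V}
    (hpq : G.Adj p q) : 2 ≤ A.rank := by
  apply le_rank_of_det_submatrix_ne_zero A ![p, q] ![p, q]
  have h1 : A p q ≠ 0 := (hA.ne_zero_iff hF p q).2 hpq
  have hp : A p p = 0 := by
    by_contra h
    exact G.irrefl ((hA.ne_zero_iff hF p p).1 h)
  rw [Matrix.det_fin_two]
  simp [hp, hA.apply_swap p q, h1]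

/-- If every vertex has a neighbour, non-adjacency is transitive in a graph described by a
skew-symmetric matrix of rank at most `2`. -/
theorem not_adj_trans_of_rank_le_two {F : Type} [Field F] (hF : (2 : F) ≠ 0) {V : Type} [Fintype V]
    {G : SimpleGraph V} (hG : ∀ v, ∃ w, G.Adj v w) {A : Matrix V V F} (hA : SkewDescribes F G A)
    (hr : A.rank ≤ 2) {a b c : V} (hab : ¬ G.Adj a b) (hbc : ¬ G.Adj b c) : ¬ G.Adj a c := by
  intro hac
  obtain ⟨d, hbd⟩ := hG b
  have hz : ∀ {i j : V}, ¬ G.Adj i j → A i j = 0 := fun {i j} h => by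
    by_contra h'
    exact h ((hA.ne_zero_iff hF i j).1 h')
  have h3 : 3 ≤ A.rank := by
    apply le_rank_of_det_submatrix_ne_zero A ![a, c, b] ![a, c, d]
    have h1 : A a c ≠ 0 := (hA.ne_zero_iff hF a c).2 hac
    have h2 : A b d ≠ 0 := (hA.ne_zero_iff hF b d).2 hbd
    rw [Matrix.det_fin_three]
    simp [hz (G.irrefl (v := a)), hz (G.irrefl (v := c)), hz hbc, hz (fun h => hab h.symm),
      hA.apply_swap a c, h1, h2]
  omega

theorem rank_sub_le_two {F : Type} [Field F] {V : Type} [Fintype V] (x : V → F) :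
    (Matrix.of fun i j => x i - x j : Matrix V V F).rank ≤ 2 := by
  have h : (Matrix.of fun i j => x i - x j : Matrix V V F) =
      (Matrix.of fun i => ![x i, 1] : Matrix V (Fin 2) F) *
        (Matrix.of fun k j => ![1, - x j] k : Matrix (Fin 2) V F) := by
    ext i j
    simp [Matrix.mul_apply, Fin.sum_univ_two, sub_eq_add_neg]
  rw [h]
  exact (Matrix.rank_mul_le_left _ _).trans ((Matrix.rank_le_card_width _).trans (by simp))

/-- For a connected graph `G` with at least two vertices over an infinite field
`F` of characteristic not `2`, `mr⁻(F,G) = 2` iff `G` is a complete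
multipartite graph. -/
theorem minSkewRank_eq_two_iff (F : Type) [Field F] [Infinite F] (hF : (2 : F) ≠ 0)
    {V : Type} [Fintype V] (G : SimpleGraph V) (hV : 2 ≤ Fintype.card V)
    (hconn : G.Connected) :
    minSkewRank F G = 2 ↔ IsCompleteMultipartite G := by
  have : Nontrivial V := Fintype.one_lt_card_iff_nontrivial.1 hV
  have hG : ∀ v, ∃ w, G.Adj v w := hconn.preconnected.exists_adj_of_nontrivial
  constructor
  · intro h
    -- The infimum is nonzero, so it is not the junk value of the empty set and is attained.
    have hne : {r : ℕ | ∃ A : Matrix V V F, SkewDescribes F G A ∧ A.rank = r}.Nonempty :=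
      Nat.nonempty_of_sInf_eq_succ h
    obtain ⟨A, hA, hr⟩ := Nat.sInf_mem hne
    replace hr : A.rank ≤ 2 := (hr.trans h).le
    have hcm : G.IsCompleteMultipartite :=
      ⟨fun a b c hab hbc => not_adj_trans_of_rank_le_two hF hG hA hr hab hbc⟩
    obtain ⟨g, hg⟩ := Countable.exists_injective_nat (Quotient hcm.setoid)
    refine ⟨fun v => g (Quotient.mk hcm.setoid v), fun a b => ?_⟩
    rw [hg.ne_iff, Ne, Quotient.eq]
    exact not_not.symm
  · rintro ⟨f, hf⟩
    obtain ⟨p⟩ := hconn.nonempty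
    obtain ⟨q, hpq⟩ := hG p
    let x : V → F := fun v => Infinite.natEmbedding F (f v)
    have hA : SkewDescribes F G (Matrix.of fun i j => x i - x j) := by
      refine ⟨by ext i j; simp, fun i j _ => ?_⟩
      rw [hf, Matrix.of_apply, sub_ne_zero]
      exact (Infinite.natEmbedding F).injective.ne_iff
    have hmem : (Matrix.of fun i j => x i - x j : Matrix V V F).rank ∈
        {r : ℕ | ∃ A : Matrix V V F, SkewDescribes F G A ∧ A.rank = r} := ⟨_, hA, rfl⟩
    refine le_antisymm ((Nat.sInf_le hmem).trans (rank_sub_le_two x)) (le_csInf ⟨_, hmem⟩ ?_)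
    rintro r ⟨B, hB, rfl⟩
    exact hB.two_le_rank hF hpq
end

section
/- Let F be an infinite field of characteristic not 2 and let G be a simple graph such that G = G₁ ∪ G₂ (the graph on the union of the vertex sets whose edge set is the union of the edge sets). Then mr⁻(F,G) ≤ mr⁻(F,G₁) + mr⁻(F,G₂). -/
/-!
Take matrices `A` and `B` realizing the minimum skew ranks of `G₁` and `G₂`. For every scalar `c`
the matrix `A + c • B` is skew-symmetric, and its rank is at most `A.rank + B.rank`. Its
off-diagonal pattern is that of `G₁ ⊔ G₂` as soon as `c ≠ 0` and no cancellation
`A i j + c * B i j = 0` occurs with `B i j ≠ 0`, that is, as soon as `c` avoids `0` and the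
finitely many values `-A i j / B i j`; an infinite field contains such a `c`.
-/

open Matrix

/-- The infimum defining `minSkewRank` is over a nonempty set: orienting each edge of `G` gives a
skew-symmetric matrix with entries in `{0, 1, -1}`. -/
theorem exists_skewDescribes (F : Type) [Field F] {V : Type} [Fintype V] (G : SimpleGraph V) :
    ∃ A : Matrix V V F, SkewDescribes F G A := by
  classical
  let e := Fintype.equivFin V
  refine ⟨Matrix.of fun i j => if G.Adj i j then (if e i < e j then 1 else -1) else 0, ?_, ?_⟩
  · ext i j
    simp only [transpose_apply, Matrix.neg_apply, of_apply, G.adj_comm j i]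
    by_cases h : G.Adj i j
    · have hne : e i ≠ e j := fun h' => h.ne (e.injective h')
      rcases lt_or_gt_of_ne hne with h1 | h1
      · simp [h, h1, h1.not_gt]
      · simp [h, h1, h1.not_gt]
    · simp [h]
  · intro i j _
    by_cases h : G.Adj i j
    · by_cases h1 : e i < e j <;> simp [h, h1]
    · simp [h]

theorem exists_rank_eq_minSkewRank (F : Type) [Field F] {V : Type} [Fintype V]
    (G : SimpleGraph V) :
    ∃ A : Matrix V V F, SkewDescribes F G A ∧ A.rank = minSkewRank F G := by
  obtain ⟨A, hA⟩ := exists_skewDescribes F G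
  exact Nat.sInf_mem (s := {r : ℕ | ∃ A : Matrix V V F, SkewDescribes F G A ∧ A.rank = r})
    ⟨A.rank, A, hA, rfl⟩

theorem rank_add_le_rank_add_rank (F : Type) [Field F] {V : Type} [Fintype V]
    (A B : Matrix V V F) : (A + B).rank ≤ A.rank + B.rank := by
  have h : LinearMap.range (A + B).mulVecLin ≤
      LinearMap.range A.mulVecLin ⊔ LinearMap.range B.mulVecLin := by
    rintro _ ⟨x, rfl⟩
    rw [Matrix.mulVecLin_add]
    exact Submodule.add_mem_sup ⟨x, rfl⟩ ⟨x, rfl⟩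
  exact (Submodule.finrank_mono h).trans (Submodule.finrank_add_le_finrank_add_finrank _ _)

/-- Subadditivity of the minimum skew rank over graph unions, for infinite
fields of characteristic not `2`. -/
theorem minSkewRank_union_le (F : Type) [Field F] [Infinite F] (hF : (2 : F) ≠ 0)
    {V : Type} [Fintype V] (G G₁ G₂ : SimpleGraph V) (hG : G = G₁ ⊔ G₂) :
    minSkewRank F G ≤ minSkewRank F G₁ + minSkewRank F G₂ := by
  classical
  obtain ⟨A, ⟨hAs, hA⟩, hAr⟩ := exists_rank_eq_minSkewRank F G₁
  obtain ⟨B, ⟨hBs, hB⟩, hBr⟩ := exists_rank_eq_minSkewRank F G₂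
  obtain ⟨c, hc⟩ := ((Set.finite_range fun p : V × V => -A p.1 p.2 / B p.1 p.2).insert
    0).exists_notMem
  simp only [Set.mem_insert_iff, Set.mem_range, Prod.exists, not_or, not_exists] at hc
  obtain ⟨hc0, hc⟩ := hc
  have hdesc : SkewDescribes F G (A + c • B) := by
    refine ⟨?_, fun i j hij => ?_⟩
    · rw [transpose_add, transpose_smul, hAs, hBs, smul_neg, neg_add]
    · rw [hG, SimpleGraph.sup_adj, ← hA i j hij, ← hB i j hij]
      simp only [Matrix.add_apply, Matrix.smul_apply, smul_eq_mul]
      by_cases hb : B i j = 0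
      · simp [hb]
      · refine iff_of_true (fun h => hc i j ?_) (Or.inr hb)
        rw [div_eq_iff hb]
        linear_combination -h
  have hsmul : (c • B).rank ≤ B.rank := by
    have h := Matrix.rank_mul_le_left B (c • (1 : Matrix V V F))
    rwa [Matrix.mul_smul, Matrix.mul_one] at h
  calc minSkewRank F G ≤ (A + c • B).rank := Nat.sInf_le ⟨_, hdesc, rfl⟩
    _ ≤ A.rank + (c • B).rank := rank_add_le_rank_add_rank F A (c • B)
    _ ≤ minSkewRank F G₁ + minSkewRank F G₂ := by rw [← hAr, ← hBr]; gcongr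
end

section
/- Let G be a simple graph on n vertices and F a field of characteristic not 2. Then M⁻(F,G) ≤ Z(G), where M⁻(F,G) = n − mr⁻(F,G) is the maximum skew nullity and Z(G) is the zero forcing number of G. -/
/-!
Fix a zero forcing set `B` and a matrix `A` describing `G`. If `A x = 0` and `x` vanishes on `B`,
then `x = 0`: when `u` forces `v`, every term of row `u` of `A x = 0` other than `A u v * x v`
vanishes, so `x v = 0`, and the colour change rule carries the vanishing to all vertices
(`eq_zero_of_zfDerived`). Hence restriction to `B` embeds `ker A` into `B → F`, which gives
`dim ker A ≤ |B|`, and rank–nullity finishes the argument (`card_le_rank_add_card`).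
The minimum defining the skew rank is taken over a nonempty set because orienting the edges
of `G` yields a skew-symmetric matrix with its pattern (`exists_skewDescribes`).
-/

open Matrix

/-- The set of black vertices derived from the initial black set `B` by the zero
forcing color change rule: if a black vertex `u` has exactly one white neighbor
`v`, then `v` is recolored black. -/
inductive ZFDerived {V : Type} (G : SimpleGraph V) (B : Set V) : V → Prop
  | init (v : V) : v ∈ B → ZFDerived G B v
  | force (u v : V) : ZFDerived G B u → G.Adj u v →
      (∀ w : V, G.Adj u w → w ≠ v → ZFDerived G B w) → ZFDerived G B v

/-- `B` is a zero forcing set of `G`: its derived set is all of `V`. -/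
def IsZeroForcingSet {V : Type} (G : SimpleGraph V) (B : Set V) : Prop :=
  ∀ v : V, ZFDerived G B v

/-- The zero forcing number of `G`: the minimum size of a zero forcing set. -/
noncomputable def zeroForcingNumber {V : Type} [Fintype V] (G : SimpleGraph V) : ℕ :=
  sInf {k : ℕ | ∃ B : Finset V, IsZeroForcingSet G ↑B ∧ B.card = k}

/-- A kernel vector vanishing on `B` vanishes on the whole derived set of `B`. A forcing vertex
is itself black, so the diagonal entries of `A` play no role. -/
theorem eq_zero_of_zfDerived {F : Type} [Field F] {V : Type} [Fintype V] {G : SimpleGraph V}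
    {A : Matrix V V F} (hA : SkewDescribes F G A) {B : Set V} {x : V → F}
    (hx : A *ᵥ x = 0) (hB : ∀ v ∈ B, x v = 0) {v : V} (hv : ZFDerived G B v) : x v = 0 := by
  induction hv with
  | init v hv => exact hB v hv
  | force u v _ huv _ ihu ihw =>
    have hsum : ∑ j, A u j * x j = 0 := congrFun hx u
    rw [Finset.sum_eq_single v] at hsum
    · exact (mul_eq_zero.mp hsum).resolve_left ((hA.2 u v huv.ne).mpr huv)
    · intro j _ hj
      by_cases hju : u = j
      · rw [← hju, ihu, mul_zero]
      by_cases hadj : G.Adj u j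
      · rw [ihw j hadj hj, mul_zero]
      · have : A u j = 0 := by
          by_contra h
          exact hadj ((hA.2 u j hju).mp h)
        rw [this, zero_mul]
    · simp

theorem card_le_rank_add_card {F : Type} [Field F] {V : Type} [Fintype V] {G : SimpleGraph V}
    {A : Matrix V V F} (hA : SkewDescribes F G A) {B : Finset V}
    (hB : IsZeroForcingSet G (B : Set V)) : Fintype.card V ≤ A.rank + B.card := by
  let K := LinearMap.ker A.mulVecLin
  let f : K →ₗ[F] (B → F) := (LinearMap.funLeft F F ((↑) : B → V)).comp K.subtype
  have hf : Function.Injective f := by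
    rw [injective_iff_map_eq_zero]
    intro x hx
    ext v
    exact eq_zero_of_zfDerived hA (LinearMap.mem_ker.mp x.2)
      (fun w hw => congrFun hx ⟨w, hw⟩) (hB v)
  have h1 := LinearMap.finrank_le_finrank_of_injective hf
  have h2 := LinearMap.finrank_range_add_finrank_ker A.mulVecLin
  simp only [Module.finrank_fintype_fun_eq_card, Fintype.card_coe] at h1 h2
  have h3 : A.rank = Module.finrank F (LinearMap.range A.mulVecLin) := rfl
  have h4 : Module.finrank F K = Module.finrank F (LinearMap.ker A.mulVecLin) := rfl
  omega

/-- The maximum skew nullity `M⁻(F,G) = n − mr⁻(F,G)` is at most the zero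
forcing number `Z(G)`. -/
theorem maxSkewNullity_le_zeroForcingNumber (F : Type) [Field F] (hF : (2 : F) ≠ 0)
    {V : Type} [Fintype V] (G : SimpleGraph V) :
    Fintype.card V - minSkewRank F G ≤ zeroForcingNumber G := by
  obtain ⟨A₀, hA₀⟩ := exists_skewDescribes F G
  obtain ⟨A, hA, hr⟩ : minSkewRank F G ∈ {r : ℕ | ∃ A : Matrix V V F,
      SkewDescribes F G A ∧ A.rank = r} := Nat.sInf_mem ⟨_, A₀, hA₀, rfl⟩
  obtain ⟨B, hB, hk⟩ : zeroForcingNumber G ∈ {k : ℕ | ∃ B : Finset V,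
      IsZeroForcingSet G ↑B ∧ B.card = k} :=
    Nat.sInf_mem ⟨_, Finset.univ, fun v => .init v (by simp), rfl⟩
  have := card_le_rank_add_card hA hB
  omega
end

section
/- Let F be an infinite field of characteristic not 2 and let G be a simple graph with a cut vertex v such that G − v consists of one component that is a complete multipartite graph containing at least one edge, together with isolated vertices (at least one isolated vertex). Then mr⁻(F,G) = 4. -/
/-!
Lower bound: an isolated vertex `u` of `G - v` is a leaf of `G` attached to `v`, so for an edge
`ab` of `G - v` the principal minor on `u, v, a, b` of any skew matrix `A` described by `G` is the
square of the Pfaffian `A u v * A a b`, which is nonzero. Concretely, the zeros of row `u` let one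
eliminate from a linear relation among these four rows, so they are independent and the rank is at
least `4` (`four_le_rank_of_leaf`). Characteristic not `2` is what makes the diagonal vanish.

Upper bound: for an injection `c : ℕ → F`, put `p = c ∘ f` on the complete multipartite part
(`f` being the labelling of its classes) and `q` the indicator of that part, let `e` be the
indicator of `v` and `w` that of the neighbours of `v`. The skew matrix `p qᵀ - q pᵀ + e wᵀ - w eᵀ`
is described by `G`: between `a` and `b` in the multipartite part its entry is `c (f a) - c (f b)`.
It is a sum of four matrices of rank at most one (`rank_wedge_add_wedge_le`).
-/

open Matrix

/-- A skew matrix described by a graph with a leaf `u` at `v`, together with an edge `ab`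
not touching `u`, has rank at least `4`. -/
theorem four_le_rank_of_leaf {F : Type} [Field F] (hF : (2 : F) ≠ 0) {V : Type} [Fintype V]
    {G : SimpleGraph V} {A : Matrix V V F} (hA : SkewDescribes F G A) {u v a b : V}
    (huv : G.Adj u v) (hab : G.Adj a b) (hua : u ≠ a) (hub : u ≠ b)
    (hua' : ¬ G.Adj u a) (hub' : ¬ G.Adj u b) : 4 ≤ A.rank := by
  obtain ⟨hskew, hpat⟩ := hA
  have hs : ∀ i j, A j i = -A i j := fun i j => congrFun (congrFun hskew i) j
  have hd : ∀ i, A i i = 0 := fun i => by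
    have h : (2 : F) * A i i = 0 := by linear_combination hs i i
    exact (mul_eq_zero.mp h).resolve_left hF
  have h1 : A u v ≠ 0 := (hpat u v huv.ne).2 huv
  have h2 : A a b ≠ 0 := (hpat a b hab.ne).2 hab
  have h3 : A u a = 0 := not_not.mp fun h => hua' ((hpat u a hua).1 h)
  have h4 : A u b = 0 := not_not.mp fun h => hub' ((hpat u b hub).1 h)
  have hli : LinearIndependent F (fun k => A (![u, v, a, b] k)) := by
    rw [Fintype.linearIndependent_iff]
    intro g hg
    simp only [Fin.sum_univ_four, Matrix.cons_val] at hg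
    have e : ∀ j, g 0 * A u j + g 1 * A v j + g 2 * A a j + g 3 * A b j = 0 :=
      fun j => by simpa using congrFun hg j
    have g1 : g 1 = 0 := by
      have := e u
      rw [hd, hs u v, hs u a, hs u b, h3, h4] at this
      simpa [h1] using this
    have g2 : g 2 = 0 := by
      have := e b
      rw [hd, h4, g1] at this
      simpa [h2] using this
    have g3 : g 3 = 0 := by
      have := e a
      rw [hd, h3, g1, hs a b] at this
      simpa [h2] using this
    have g0 : g 0 = 0 := by
      have := e v
      rw [g1, g2, g3] at this
      simpa [h1] using this
    intro k
    fin_cases k <;> assumption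
  rw [Matrix.rank_eq_finrank_span_row]
  have hspan := finrank_span_eq_card hli
  rw [Fintype.card_fin] at hspan
  refine hspan.ge.trans ?_
  apply Submodule.finrank_mono
  apply Submodule.span_mono
  rintro _ ⟨k, rfl⟩
  exact ⟨_, rfl⟩

/-- The matrix `p qᵀ - q pᵀ + e wᵀ - w eᵀ` has rank at most `4`. -/
theorem rank_wedge_add_wedge_le {F : Type} [Field F] {V : Type} [Fintype V]
    (p q e w : V → F) :
    (Matrix.of fun i j => p i * q j - q i * p j + (e i * w j - w i * e j)).rank ≤ 4 := by
  have h : (Matrix.of fun i j => p i * q j - q i * p j + (e i * w j - w i * e j)) =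
      (Matrix.of fun i => ![p i, q i, e i, w i] : Matrix V (Fin 4) F) *
        (Matrix.of ![q, -p, w, -e] : Matrix (Fin 4) V F) := by
    ext i j
    simp [Matrix.mul_apply, Fin.sum_univ_four]
    ring
  rw [h]
  refine (Matrix.rank_mul_le_left _ _).trans ?_
  simpa using Matrix.rank_le_card_width (Matrix.of fun i => ![p i, q i, e i, w i])

/-- Sufficiency, case (ii): if `v` is a cut vertex of `G` and `G − v` consists
of one complete multipartite component `W` containing at least one edge,
together with at least one isolated vertex, then `mr⁻(F,G) = 4`. -/
theorem minSkewRank_eq_four_case_two (F : Type) [Field F] [Infinite F]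
    (hF : (2 : F) ≠ 0) {V : Type} [Fintype V] [DecidableEq V]
    (G : SimpleGraph V) (v : V)
    (hconn : G.Connected) (hcut : ¬ (G.induce {u : V | u ≠ v}).Connected)
    (W : Set {u : V // u ≠ v})
    (hedges : ∀ a b, (G.induce {u : V | u ≠ v}).Adj a b → a ∈ W ∧ b ∈ W)
    (hm : IsCompleteMultipartite ((G.induce {u : V | u ≠ v}).induce W))
    (he : ∃ a b, ((G.induce {u : V | u ≠ v}).induce W).Adj a b)
    (hiso : ∃ u : {u : V // u ≠ v}, u ∉ W) :
    minSkewRank F G = 4 := by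
  classical
  obtain ⟨f, hf⟩ := hm
  obtain ⟨⟨⟨a, hav⟩, haW⟩, ⟨⟨b, hbv⟩, hbW⟩, hab⟩ := he
  obtain ⟨⟨u, hu⟩, huW⟩ := hiso
  have hnot : ∀ x, x ≠ v → ¬ G.Adj u x := fun x hx h =>
    huW (hedges ⟨u, hu⟩ ⟨x, hx⟩ h).1
  have huv : G.Adj u v := by
    have : Nontrivial V := ⟨u, v, hu⟩
    obtain ⟨x, hx⟩ := hconn.preconnected.exists_adj_of_nontrivial u
    by_cases hxv : x = v
    · exact hxv ▸ hx
    · exact absurd hx (hnot x hxv)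
  have lower : ∀ A : Matrix V V F, SkewDescribes F G A → 4 ≤ A.rank := fun A hA =>
    four_le_rank_of_leaf hF hA huv hab (fun h => huW (by subst h; exact haW))
      (fun h => huW (by subst h; exact hbW)) (hnot a hav) (hnot b hbv)
  let c : ℕ → F := Infinite.natEmbedding F
  have hc : Function.Injective c := (Infinite.natEmbedding F).injective
  -- `S` is the image of `W` in `V`; `p` and `q` vanish off it.
  let S : V → Prop := fun x => ∃ h : x ≠ v, (⟨x, h⟩ : {u : V // u ≠ v}) ∈ W
  let p : V → F := fun x => if h : S x then c (f ⟨⟨x, h.1⟩, h.2⟩) else 0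
  let q : V → F := fun x => if S x then 1 else 0
  let e : V → F := fun x => if x = v then 1 else 0
  let w : V → F := fun x => if G.Adj v x then 1 else 0
  let A : Matrix V V F :=
    Matrix.of fun i j => p i * q j - q i * p j + (e i * w j - w i * e j)
  have hSv : ¬ S v := fun h => h.1 rfl
  have hA : SkewDescribes F G A := by
    refine ⟨?_, ?_⟩
    · ext i j
      simp only [A, Matrix.transpose_apply, Matrix.neg_apply, Matrix.of_apply]
      ring
    · intro i j hij
      by_cases hi : i = v
      · subst hi
        simp [A, p, q, e, w, hSv, hij.symm]
      by_cases hj : j = v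
      · subst hj
        simp [A, p, q, e, w, hSv, G.adj_comm]
      by_cases hSi : S i
      · by_cases hSj : S j
        · have := hf ⟨⟨i, hSi.1⟩, hSi.2⟩ ⟨⟨j, hSj.1⟩, hSj.2⟩
          change G.Adj i j ↔ _ at this
          rw [this]
          simp [A, p, q, e, hSi, hSj, hi, hj, sub_eq_zero, hc.eq_iff]
        · have hn : ¬ G.Adj i j := fun h => hSj ⟨hj, (hedges ⟨i, hi⟩ ⟨j, hj⟩ h).2⟩
          simp [A, p, q, e, hSj, hi, hj, hn]
      · have hn : ¬ G.Adj i j := fun h => hSi ⟨hi, (hedges ⟨i, hi⟩ ⟨j, hj⟩ h).1⟩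
        simp [A, p, q, e, hSi, hi, hj, hn]
  have hmem : (4 : ℕ) ∈ {r : ℕ | ∃ A : Matrix V V F, SkewDescribes F G A ∧ A.rank = r} :=
    ⟨A, hA, le_antisymm (rank_wedge_add_wedge_le p q e w) (lower A hA)⟩
  refine le_antisymm (Nat.sInf_le hmem) (le_csInf ⟨4, hmem⟩ ?_)
  rintro r ⟨B, hB, rfl⟩
  exact lower B hB
end

section
/- Let G be a k-path (k ≥ 1) with at least k+2 vertices and let v be a vertex of G of degree k. Then G − v is a k-path. -/
/-!
Deleting a degree-`k` vertex `v` from a `k`-tree with at least `k + 2` vertices leaves a `k`-tree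
(`IsKTreeOn.delete`): in the recursive construction, `v` is either the last vertex added or lies
outside the clique to which the last vertex is attached, so `v` can be
deleted one step earlier; if that earlier graph is `K_{k+1}`, the last vertex replaces `v` in it.

It remains to count the vertices of degree `k` in `G - v` when it has at least `k + 2` vertices.
Every `k`-tree of this size has at least two of them (`IsKTreeOn.exists_two`), and no two of them
are adjacent (`IsKTreeOn.not_adj`). The neighbours of `v` form a clique (`IsKTreeOn.nbrs_clique`),
so at most one of them has degree `k` in `G - v`. Every other vertex has the same degree in `G - v`
as in `G`, and only one vertex of `G` other than `v` has degree `k`. Hence `G - v` has at most,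
so exactly, two vertices of degree `k`.
-/

/-- `IsKTreeOn k s G`: the graph `G` (all of whose edges lie inside the finite
vertex set `s`) is a `k`-tree on the vertex set `s`, built by the recursive
definition: `K_{k+1}` is a `k`-tree, and a `k`-tree is extended by adding a new
vertex adjacent to precisely the vertices of a `k`-clique. -/
inductive IsKTreeOn {V : Type} [DecidableEq V] (k : ℕ) : Finset V → SimpleGraph V → Prop
  | base (s : Finset V) (G : SimpleGraph V) :
      s.card = k + 1 →
      (∀ a b : V, G.Adj a b ↔ a ≠ b ∧ a ∈ s ∧ b ∈ s) →
      IsKTreeOn k s G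
  | step (s : Finset V) (H : SimpleGraph V) (v : V) (c : Finset V) (G : SimpleGraph V) :
      IsKTreeOn k s H → v ∉ s → c ⊆ s → c.card = k →
      (∀ a ∈ c, ∀ b ∈ c, a ≠ b → H.Adj a b) →
      (∀ a b : V, G.Adj a b ↔ H.Adj a b ∨ (a = v ∧ b ∈ c) ∨ (b = v ∧ a ∈ c)) →
      IsKTreeOn k (insert v s) G

/-- `G` is a `k`-tree (on its whole finite vertex type). -/
def IsKTree {V : Type} [Fintype V] [DecidableEq V] (k : ℕ) (G : SimpleGraph V) : Prop :=
  IsKTreeOn k Finset.univ G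

/-- The degree of a vertex `v` in `G`, as the number of neighbors of `v`. -/
noncomputable def vertDegree {V : Type} (G : SimpleGraph V) (v : V) : ℕ :=
  {u : V | G.Adj v u}.ncard

/-- `G` is a `k`-path: a `k`-tree which is either `K_{k+1}` or has exactly two
vertices of degree `k`. -/
def IsKPath {V : Type} [Fintype V] [DecidableEq V] (k : ℕ) (G : SimpleGraph V) : Prop :=
  IsKTree k G ∧
    (Fintype.card V = k + 1 ∨ {v : V | vertDegree G v = k}.ncard = 2)

section Step

/-! ### Degrees after one extension step -/

variable {V : Type} {s c : Finset V} {H G : SimpleGraph V} {w : V}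

lemma vertDegree_congr {G₁ G₂ : SimpleGraph V} {x : V} (h : ∀ u, G₁.Adj x u ↔ G₂.Adj x u) :
    vertDegree G₁ x = vertDegree G₂ x := by
  simp only [vertDegree, h]

lemma step_degree_new (hH : ∀ a b, H.Adj a b → a ∈ s ∧ b ∈ s) (hw : w ∉ s) (hc : c ⊆ s)
    (hG : ∀ a b : V, G.Adj a b ↔ H.Adj a b ∨ (a = w ∧ b ∈ c) ∨ (b = w ∧ a ∈ c)) :
    vertDegree G w = c.card := by
  have : {u : V | G.Adj w u} = (c : Set V) := by
    ext u
    simp only [Set.mem_ofPred_eq, hG, Finset.mem_coe]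
    constructor
    · rintro (h | h | h)
      · exact absurd (hH _ _ h).1 hw
      · exact h.2
      · exact absurd (hc h.2) hw
    · intro h
      simp [h]
  rw [vertDegree, this, Set.ncard_coe_finset]

lemma step_adj_old {x : V} (hxw : x ≠ w) (hxc : x ∉ c)
    (hG : ∀ a b : V, G.Adj a b ↔ H.Adj a b ∨ (a = w ∧ b ∈ c) ∨ (b = w ∧ a ∈ c)) (u : V) :
    G.Adj x u ↔ H.Adj x u := by
  simp [hG, hxw, hxc]

lemma step_degree_clique [Finite V] (hH : ∀ a b, H.Adj a b → a ∈ s ∧ b ∈ s) (hw : w ∉ s)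
    (hc : c ⊆ s)
    (hG : ∀ a b : V, G.Adj a b ↔ H.Adj a b ∨ (a = w ∧ b ∈ c) ∨ (b = w ∧ a ∈ c))
    {x : V} (hx : x ∈ c) : vertDegree G x = vertDegree H x + 1 := by
  have hxw : x ≠ w := fun h => hw (h ▸ hc hx)
  have : {u : V | G.Adj x u} = insert w {u : V | H.Adj x u} := by
    ext u
    simp [hG, hxw, hx, or_comm]
  rw [vertDegree, this, Set.ncard_insert_of_notMem]
  · rfl
  · exact fun h => hw (hH _ _ h).2

end Step

namespace IsKTreeOn

/-! ### Vertices of degree `k` in a `k`-tree -/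

variable {V : Type} [DecidableEq V] {k : ℕ} {s : Finset V} {G : SimpleGraph V}

lemma mem_of_adj (h : IsKTreeOn k s G) : ∀ a b, G.Adj a b → a ∈ s ∧ b ∈ s := by
  induction h with
  | base s G hs hG => exact fun a b hab => ((hG a b).1 hab).2
  | step s H w c G hH hw hc hk hcl hG ih =>
    intro a b hab
    rcases (hG a b).1 hab with h | ⟨rfl, h⟩ | ⟨rfl, h⟩
    · exact ⟨Finset.mem_insert_of_mem (ih a b h).1, Finset.mem_insert_of_mem (ih a b h).2⟩
    · exact ⟨Finset.mem_insert_self _ _, Finset.mem_insert_of_mem (hc h)⟩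
    · exact ⟨Finset.mem_insert_of_mem (hc h), Finset.mem_insert_self _ _⟩

lemma card_ge (h : IsKTreeOn k s G) : k + 1 ≤ s.card := by
  induction h with
  | base s G hs hG => exact hs.ge
  | step s H w c G hH hw hc hk hcl hG ih =>
    rw [Finset.card_insert_of_notMem hw]; omega

lemma complete_of_card (h : IsKTreeOn k s G) (hs : s.card = k + 1) :
    ∀ a b : V, G.Adj a b ↔ a ≠ b ∧ a ∈ s ∧ b ∈ s := by
  cases h with
  | base _ _ _ hG => exact hG
  | step s H w c _ hH hw hc hk hcl hG =>
    rw [Finset.card_insert_of_notMem hw] at hs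
    have := hH.card_ge
    omega

lemma degree_of_complete (hs : s.card = k + 1)
    (hG : ∀ a b : V, G.Adj a b ↔ a ≠ b ∧ a ∈ s ∧ b ∈ s) {x : V} (hx : x ∈ s) :
    vertDegree G x = k := by
  have : {u : V | G.Adj x u} = (s.erase x : Finset V) := by
    ext u
    simp [hG, hx, eq_comm, and_comm]
  rw [vertDegree, this, Set.ncard_coe_finset, Finset.card_erase_of_mem hx]
  omega

variable [Finite V]

lemma degree_ge (h : IsKTreeOn k s G) : ∀ x ∈ s, k ≤ vertDegree G x := by
  induction h with
  | base s G hs hG => exact fun x hx => (degree_of_complete hs hG hx).ge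
  | step s H w c G hH hw hc hk hcl hG ih =>
    intro x hx
    rcases Finset.mem_insert.1 hx with rfl | hx
    · exact (step_degree_new hH.mem_of_adj hw hc hG ▸ hk).ge
    · by_cases hxc : x ∈ c
      · have := step_degree_clique hH.mem_of_adj hw hc hG hxc
        have := ih x hx
        omega
      · rw [vertDegree_congr (step_adj_old (ne_of_mem_of_not_mem hx hw) hxc hG)]
        exact ih x hx

/-- A degree-`k` vertex cannot have received an edge in the last extension step, since it already
had degree at least `k` before. -/
lemma notMem_clique {H : SimpleGraph V} {w x : V} {c : Finset V} (hH : IsKTreeOn k s H)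
    (hw : w ∉ s) (hc : c ⊆ s)
    (hG : ∀ a b : V, G.Adj a b ↔ H.Adj a b ∨ (a = w ∧ b ∈ c) ∨ (b = w ∧ a ∈ c))
    (hx : vertDegree G x = k) : x ∉ c := by
  intro hxc
  have h1 := step_degree_clique hH.mem_of_adj hw hc hG hxc
  have h2 := hH.degree_ge x (hc hxc)
  omega

lemma nbrs_clique (h : IsKTreeOn k s G) {x : V} (hx : vertDegree G x = k) {a b : V}
    (ha : G.Adj x a) (hb : G.Adj x b) (hab : a ≠ b) : G.Adj a b := by
  induction h with
  | base s G hs hG =>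
    rw [hG] at *
    exact ⟨hab, ha.2.2, hb.2.2⟩
  | step s H w c G hH hw hc hk hcl hG ih =>
    have hxc := notMem_clique hH hw hc hG hx
    refine (hG a b).2 (Or.inl ?_)
    by_cases hxw : x = w
    · subst hxw
      have key : ∀ u, G.Adj x u → u ∈ c := by
        intro u hu
        rcases (hG x u).1 hu with h | h | h
        · exact absurd (hH.mem_of_adj _ _ h).1 hw
        · exact h.2
        · exact absurd h.2 hxc
      exact hcl a (key a ha) b (key b hb) hab
    · have e := step_adj_old hxw hxc hG
      exact ih (by rw [← vertDegree_congr e, hx]) ((e a).1 ha) ((e b).1 hb)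

lemma not_adj (h : IsKTreeOn k s G) (hs : k + 2 ≤ s.card) {x y : V}
    (hx : vertDegree G x = k) (hy : vertDegree G y = k) : ¬ G.Adj x y := by
  induction h with
  | base s G hs' hG => omega
  | step s H w c G hH hw hc hk hcl hG ih =>
    intro hxy
    have hxc := notMem_clique hH hw hc hG hx
    have hyc := notMem_clique hH hw hc hG hy
    have hH' : H.Adj x y := by
      rcases (hG x y).1 hxy with h | h | h
      · exact h
      · exact absurd h.2 hyc
      · exact absurd h.2 hxc
    obtain ⟨hxs, hys⟩ := hH.mem_of_adj _ _ hH'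
    have ex := vertDegree_congr (step_adj_old (ne_of_mem_of_not_mem hxs hw) hxc hG)
    have ey := vertDegree_congr (step_adj_old (ne_of_mem_of_not_mem hys hw) hyc hG)
    by_cases hcard : k + 2 ≤ s.card
    · exact ih hcard (ex ▸ hx) (ey ▸ hy) hH'
    · have hsub : insert x (insert y c) ⊆ s :=
        Finset.insert_subset hxs (Finset.insert_subset hys hc)
      -- `c` has `k` of the `k + 1` vertices of `s`, so it cannot miss both `x` and `y`.
      have := Finset.card_le_card hsub
      rw [Finset.card_insert_of_notMem (by simp [hH'.ne, hxc]),
        Finset.card_insert_of_notMem hyc] at this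
      omega

lemma exists_two (h : IsKTreeOn k s G) (hs : k + 2 ≤ s.card) :
    ∃ x ∈ s, ∃ y ∈ s, x ≠ y ∧ vertDegree G x = k ∧ vertDegree G y = k := by
  induction h with
  | base s G hs' hG => omega
  | step s H w c G hH hw hc hk hcl hG ih =>
    -- The new vertex has degree `k`; a degree-`k` vertex of `H` outside `c` keeps its degree.
    suffices hz : ∃ z ∈ s, z ∉ c ∧ vertDegree H z = k by
      obtain ⟨z, hzs, hzc, hz⟩ := hz
      have hzw : z ≠ w := fun h => hw (h ▸ hzs)
      refine ⟨w, Finset.mem_insert_self _ _, z, Finset.mem_insert_of_mem hzs, hzw.symm, ?_, ?_⟩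
      · rw [step_degree_new hH.mem_of_adj hw hc hG, hk]
      · rw [vertDegree_congr (step_adj_old hzw hzc hG), hz]
    have hge := hH.card_ge
    by_cases hcard : k + 2 ≤ s.card
    · obtain ⟨x, hx, y, hy, hxy, dx, dy⟩ := ih hcard
      by_cases hxc : x ∈ c
      · exact ⟨y, hy, fun hyc => hH.not_adj hcard dx dy (hcl x hxc y hyc hxy), dy⟩
      · exact ⟨x, hx, hxc, dx⟩
    · obtain ⟨z, hzs, hzc⟩ := Finset.exists_mem_notMem_of_card_lt_card (s := c) (t := s) (by omega)
      have hs1 : s.card = k + 1 := by omega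
      exact ⟨z, hzs, hzc, degree_of_complete hs1 (hH.complete_of_card hs1) hzs⟩

/-! ### Deleting a vertex -/

/-- Deletion of a degree-`k` vertex, with `G - x` encoded as a graph `G'` on the same type `V`
in which `x` is isolated. -/
lemma delete (h : IsKTreeOn k s G) (hs : k + 2 ≤ s.card) {x : V} (hxs : x ∈ s)
    (hx : vertDegree G x = k) (G' : SimpleGraph V)
    (hG' : ∀ a b, G'.Adj a b ↔ G.Adj a b ∧ a ≠ x ∧ b ≠ x) : IsKTreeOn k (s.erase x) G' := by
  induction h generalizing G' with
  | base s G hs' hG => omega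
  | step s H w c G hH hw hc hk hcl hG ih =>
    have hxc := notMem_clique hH hw hc hG hx
    by_cases hxw : x = w
    · subst hxw
      rw [Finset.erase_insert hw]
      have : G' = H := by
        ext a b
        rw [hG', hG]
        constructor
        · rintro ⟨h | h | h, h1, h2⟩
          · exact h
          · exact absurd h.1 h1
          · exact absurd h.1 h2
        · intro h
          have := hH.mem_of_adj _ _ h
          exact ⟨Or.inl h, fun e => hw (e ▸ this.1), fun e => hw (e ▸ this.2)⟩
      rwa [this]
    · have hxs' : x ∈ s := (Finset.mem_insert.1 hxs).resolve_left hxw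
      have dH : vertDegree H x = k := by
        rw [← vertDegree_congr (step_adj_old hxw hxc hG), hx]
      have hc' : c ⊆ s.erase x := fun a ha =>
        Finset.mem_erase.2 ⟨fun e => hxc (e ▸ ha), hc ha⟩
      have hge := hH.card_ge
      by_cases hcard : k + 2 ≤ s.card
      · rw [Finset.erase_insert_of_ne (Ne.symm hxw)]
        let H' : SimpleGraph V :=
          { Adj := fun a b => H.Adj a b ∧ a ≠ x ∧ b ≠ x
            symm := ⟨fun a b h => ⟨h.1.symm, h.2.2, h.2.1⟩⟩
            loopless := ⟨fun a h => h.1.ne rfl⟩ }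
        refine step (s.erase x) H' w c G' (ih hcard hxs' dH H' fun a b => Iff.rfl)
          (fun h => hw (Finset.mem_of_mem_erase h)) hc' hk ?_ ?_
        · exact fun a ha b hb hab =>
            ⟨hcl a ha b hb hab, fun e => hxc (e ▸ ha), fun e => hxc (e ▸ hb)⟩
        · intro a b
          rw [hG', hG]
          change _ ↔ (H.Adj a b ∧ a ≠ x ∧ b ≠ x) ∨ _
          grind
      · have hs1 : s.card = k + 1 := by omega
        -- `H` is complete and `c` is all of `s` except `x`, so `w` takes over the role of `x`.
        have hcomp := hH.complete_of_card hs1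
        have hce : c = s.erase x :=
          Finset.eq_of_subset_of_card_le hc' (by rw [Finset.card_erase_of_mem hxs']; omega)
        refine base _ _ ?_ ?_
        · rw [Finset.card_erase_of_mem hxs, Finset.card_insert_of_notMem hw]; omega
        · intro a b
          rw [hG', hG, hcomp, hce]
          simp only [Finset.mem_erase, Finset.mem_insert]
          grind

end IsKTreeOn

/-! ### Restriction to a subtype -/

/-- The `k`-tree property passes to an induced subgraph on a set `t` of vertices containing all
vertices of the `k`-tree, where `s'` is the vertex set `s` viewed inside the subtype `t`. -/
lemma IsKTreeOn.induce {V : Type} [DecidableEq V] {k : ℕ} {s : Finset V} {G : SimpleGraph V}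
    (h : IsKTreeOn k s G) (t : Set V) [DecidableEq t] (hst : ∀ x ∈ s, x ∈ t) (s' : Finset t)
    (hs' : ∀ x : t, x ∈ s' ↔ x.1 ∈ s) : IsKTreeOn k s' (G.induce t) := by
  have card_eq : ∀ (s : Finset V) (s' : Finset t), (∀ x ∈ s, x ∈ t) →
      (∀ x : t, x ∈ s' ↔ x.1 ∈ s) → s'.card = s.card := by
    intro s s' hst hs'
    rw [← Finset.card_map (Function.Embedding.subtype _)]
    congr 1
    ext a
    simp only [Finset.mem_map, Function.Embedding.subtype_apply]
    exact ⟨fun ⟨x, hx, e⟩ => e ▸ (hs' x).1 hx, fun ha => ⟨⟨a, hst a ha⟩, (hs' _).2 ha, rfl⟩⟩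
  induction h generalizing s' with
  | base s G hs hG =>
    refine base _ _ ((card_eq s s' hst hs').trans hs) ?_
    intro a b
    simp [hG, hs', Subtype.ext_iff]
  | step s H w c G hH hw hc hk hcl hG ih =>
    have hst' : ∀ x ∈ s, x ∈ t := fun x hx => hst x (Finset.mem_insert_of_mem hx)
    have hwt : w ∈ t := hst w (Finset.mem_insert_self _ _)
    classical
    let s₀ : Finset t := s.subtype (· ∈ t)
    let c₀ : Finset t := c.subtype (· ∈ t)
    have hs₀ : ∀ x : t, x ∈ s₀ ↔ x.1 ∈ s := fun x => Finset.mem_subtype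
    have hc₀ : ∀ x : t, x ∈ c₀ ↔ x.1 ∈ c := fun x => Finset.mem_subtype
    have e : s' = insert (⟨w, hwt⟩ : t) s₀ := by
      ext x
      rw [hs', Finset.mem_insert, Finset.mem_insert, hs₀, Subtype.ext_iff]
    rw [e]
    refine step s₀ (H.induce t) ⟨w, hwt⟩ c₀ _ (ih hst' s₀ hs₀) ?_ ?_ ?_ ?_ ?_
    · rwa [hs₀]
    · intro x hx
      rw [hs₀]
      exact hc ((hc₀ x).1 hx)
    · rw [card_eq c c₀ (fun x hx => hst' x (hc hx)) hc₀, hk]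
    · intro a ha b hb hab
      exact hcl a ((hc₀ a).1 ha) b ((hc₀ b).1 hb) (fun e => hab (Subtype.ext e))
    · intro a b
      simp [hG, hc₀, Subtype.ext_iff]

/-! ### Deletion in `k`-paths -/

/-- Deleting a vertex of degree `k` from a `k`-path with at least `k + 2`
vertices yields a `k`-path. -/
theorem isKPath_delete_degree_k_vertex {V : Type} [Fintype V] [DecidableEq V]
    (k : ℕ) (hk : 1 ≤ k) (G : SimpleGraph V) (hG : IsKPath k G)
    (hn : k + 2 ≤ Fintype.card V) (v : V) (hv : vertDegree G v = k) :
    IsKPath k (G.induce {u : V | u ≠ v}) := by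
  obtain ⟨hT, hP⟩ := hG
  have hT : IsKTreeOn k Finset.univ G := hT
  have hP : {v : V | vertDegree G v = k}.ncard = 2 := hP.resolve_left (by omega)
  let G' : SimpleGraph V :=
    { Adj := fun a b => G.Adj a b ∧ a ≠ v ∧ b ≠ v
      symm := ⟨fun a b h => ⟨h.1.symm, h.2.2, h.2.1⟩⟩
      loopless := ⟨fun a h => h.1.ne rfl⟩ }
  have hT' : IsKTreeOn k (Finset.univ.erase v) G' :=
    hT.delete hn (Finset.mem_univ v) hv G' fun a b => Iff.rfl
  have hind : G.induce {u : V | u ≠ v} = G'.induce {u : V | u ≠ v} := by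
    ext a b
    exact ⟨fun h => ⟨h, a.2, b.2⟩, fun h => h.1⟩
  rw [hind]
  refine ⟨hT'.induce _ (fun x hx => Finset.ne_of_mem_erase hx) _ fun x => ?_, ?_⟩
  · have hx : x.1 ≠ v := x.2
    simp [hx]
  have hcardV : (Finset.univ.erase v).card = Fintype.card V - 1 := by
    rw [Finset.card_erase_of_mem (Finset.mem_univ v), Finset.card_univ]
  by_cases hcard : Fintype.card V = k + 2
  · left
    rw [← Nat.card_eq_fintype_card, Nat.card_coe_set_eq]
    have : {u : V | u ≠ v} = ((Finset.univ.erase v : Finset V) : Set V) := by ext; simp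
    rw [this, Set.ncard_coe_finset, hcardV]
    omega
  right
  have hcard' : k + 2 ≤ (Finset.univ.erase v).card := by omega
  have hdeg : ∀ x : {u : V | u ≠ v},
      vertDegree (G'.induce {u : V | u ≠ v}) x = vertDegree G' x.1 := by
    intro x
    rw [vertDegree, vertDegree, ← Set.ncard_image_of_injective _ Subtype.val_injective]
    congr 1
    ext u
    constructor
    · rintro ⟨y, hy, rfl⟩
      exact hy
    · intro hu
      exact ⟨⟨u, hu.2.2⟩, hu, rfl⟩
  -- In `G'` the vertex `v` is isolated, and `0 ≠ k`.
  have hv' : vertDegree G' v ≠ k := by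
    have : vertDegree G' v = 0 := by
      have : {u : V | G'.Adj v u} = ∅ := by
        ext u
        simp [G']
      rw [vertDegree, this, Set.ncard_empty]
    omega
  have himg : {x : {u : V | u ≠ v} | vertDegree (G'.induce {u : V | u ≠ v}) x = k}.ncard
      = {x : V | vertDegree G' x = k}.ncard := by
    rw [← Set.ncard_image_of_injective _ Subtype.val_injective]
    congr 1
    ext x
    constructor
    · rintro ⟨y, hy, rfl⟩
      exact (hdeg y).symm.trans hy
    · intro hx
      have hxv : x ≠ v := fun e => hv' (e ▸ hx)
      exact ⟨⟨x, hxv⟩, (hdeg ⟨x, hxv⟩).trans hx, rfl⟩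
  rw [himg]
  apply le_antisymm
  · have hsub : {x : V | vertDegree G' x = k} ⊆
        ({x : V | vertDegree G x = k} \ {v}) ∪ {x : V | vertDegree G' x = k ∧ G.Adj v x} := by
      intro x hx
      by_cases hvx : G.Adj v x
      · exact Or.inr ⟨hx, hvx⟩
      · have hxv : x ≠ v := fun e => hv' (e ▸ hx)
        refine Or.inl ⟨?_, hxv⟩
        rw [Set.mem_ofPred_eq, ← show vertDegree G' x = k from hx]
        refine vertDegree_congr fun u => ⟨fun h => ⟨h, hxv, ?_⟩, fun h => h.1⟩
        rintro rfl
        exact hvx h.symm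
    have h1 : ({x : V | vertDegree G x = k} \ {v}).ncard = 1 := by
      rw [Set.ncard_sdiff_singleton_of_mem (by exact hv), hP]
    have h2 : {x : V | vertDegree G' x = k ∧ G.Adj v x}.ncard ≤ 1 := by
      rw [Set.ncard_le_one]
      rintro a ⟨ha, hva⟩ b ⟨hb, hvb⟩
      by_contra hab
      exact hT'.not_adj hcard' ha hb
        ⟨hT.nbrs_clique hv hva hvb hab, hva.ne', hvb.ne'⟩
    have h3 := Set.ncard_le_ncard hsub
    have h4 := Set.ncard_union_le ({x : V | vertDegree G x = k} \ {v})
      {x : V | vertDegree G' x = k ∧ G.Adj v x}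
    omega
  · obtain ⟨x, -, y, -, hxy, dx, dy⟩ := hT'.exists_two hcard'
    rw [← Set.ncard_pair hxy]
    refine Set.ncard_le_ncard ?_
    rintro z (rfl | rfl)
    · exact dx
    · exact dy
end

section
/- Let G be a k-path on n vertices (k ≥ 1, n ≥ k+1). Then the zero forcing number of G satisfies Z(G) ≤ k. -/
/-! ### Neighbourhoods, ends and one-vertex extensions -/

open Classical in
/-- The neighbours of `v` in `G` that lie in the finite vertex set `t`. -/
noncomputable def nbrs {V : Type} (t : Finset V) (G : SimpleGraph V) (v : V) : Finset V :=
  {u ∈ t | G.Adj v u}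

open Classical in
/-- The ends of a `k`-tree `G` on the vertex set `t`: its vertices of degree `k`. -/
noncomputable def ends {V : Type} (k : ℕ) (t : Finset V) (G : SimpleGraph V) : Finset V :=
  {v ∈ t | (nbrs t G v).card = k}

/-- `G` arises from the `k`-tree `H` on `s` by adding the new vertex `v`, adjacent to precisely the
vertices of the `k`-clique `c` of `H`. -/
structure IsExt {V : Type} [DecidableEq V] (k : ℕ) (s : Finset V) (H : SimpleGraph V) (v : V)
    (c : Finset V) (G : SimpleGraph V) : Prop where
  tree : IsKTreeOn k s H
  notMem : v ∉ s
  sub : c ⊆ s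
  card : c.card = k
  clique : ∀ a ∈ c, ∀ b ∈ c, a ≠ b → H.Adj a b
  adj : ∀ a b : V, G.Adj a b ↔ H.Adj a b ∨ (a = v ∧ b ∈ c) ∨ (b = v ∧ a ∈ c)

theorem mem_nbrs {V : Type} {t : Finset V} {G : SimpleGraph V} {v u : V} :
    u ∈ nbrs t G v ↔ u ∈ t ∧ G.Adj v u := by
  simp [nbrs]

theorem mem_ends {V : Type} {k : ℕ} {t : Finset V} {G : SimpleGraph V} {v : V} :
    v ∈ ends k t G ↔ v ∈ t ∧ (nbrs t G v).card = k := by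
  simp [ends]

section KTree

variable {V : Type} [DecidableEq V] {k : ℕ}

theorem IsKTreeOn.supp {t : Finset V} {G : SimpleGraph V} (h : IsKTreeOn k t G) :
    ∀ a b, G.Adj a b → a ∈ t ∧ b ∈ t := by
  induction h with
  | base s G hc hadj => intro a b hab; exact ((hadj a b).1 hab).2
  | step s H v c G hH hv hcs hck hcl hadj ih =>
    intro a b hab
    rcases (hadj a b).1 hab with h | ⟨rfl, h⟩ | ⟨rfl, h⟩
    · have := ih a b h
      simp [this]
    · simp [hcs h]
    · simp [hcs h]

theorem IsKTreeOn.le_card {t : Finset V} {G : SimpleGraph V} (h : IsKTreeOn k t G) :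
    k + 1 ≤ t.card := by
  induction h with
  | base s G hc hadj => omega
  | step s H v c G hH hv hcs hck hcl hadj ih =>
    rw [Finset.card_insert_of_notMem hv]; omega

theorem IsKTreeOn.complete {t : Finset V} {G : SimpleGraph V} (h : IsKTreeOn k t G)
    (ht : t.card = k + 1) : ∀ a b, G.Adj a b ↔ a ≠ b ∧ a ∈ t ∧ b ∈ t := by
  cases h with
  | base _ _ hc hadj => exact hadj
  | step s H v c _ hH hv hcs hck hcl hadj =>
    rw [Finset.card_insert_of_notMem hv] at ht
    have := hH.le_card
    omega

theorem nbrs_card_of_complete {t : Finset V} {G : SimpleGraph V} (h : IsKTreeOn k t G)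
    (ht : t.card = k + 1) {v : V} (hv : v ∈ t) : (nbrs t G v).card = k := by
  have : nbrs t G v = t.erase v := by
    ext u
    rw [mem_nbrs, h.complete ht, Finset.mem_erase]
    grind
  rw [this, Finset.card_erase_of_mem hv, ht]
  rfl

namespace IsExt

variable {s c : Finset V} {H G : SimpleGraph V} {v : V}

theorem toKTree (e : IsExt k s H v c G) : IsKTreeOn k (insert v s) G :=
  .step s H v c G e.tree e.notMem e.sub e.card e.clique e.adj

theorem nbrs_new (e : IsExt k s H v c G) : nbrs (insert v s) G v = c := by
  ext u
  have h1 := e.tree.supp v u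
  have h2 := e.notMem
  have h3 := @e.sub u
  rw [mem_nbrs, e.adj, Finset.mem_insert]
  grind

theorem nbrs_notMem (e : IsExt k s H v c G) {a : V} (ha : a ∈ s) (hac : a ∉ c) :
    nbrs (insert v s) G a = nbrs s H a := by
  ext u
  have h1 := e.tree.supp a u
  have h2 := e.notMem
  rw [mem_nbrs, mem_nbrs, e.adj, Finset.mem_insert]
  grind

theorem nbrs_mem (e : IsExt k s H v c G) {a : V} (hac : a ∈ c) :
    (nbrs (insert v s) G a).card = (nbrs s H a).card + 1 := by
  have h2 := e.notMem
  have ha := e.sub hac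
  have : nbrs (insert v s) G a = insert v (nbrs s H a) := by
    ext u
    have h1 := e.tree.supp a u
    rw [mem_nbrs, Finset.mem_insert, Finset.mem_insert, mem_nbrs, e.adj]
    grind
  rw [this, Finset.card_insert_of_notMem]
  rw [mem_nbrs]
  exact fun h => h2 h.1

end IsExt

/-- Every vertex of a `k`-tree has degree at least `k`. -/
theorem IsKTreeOn.le_degree {t : Finset V} {G : SimpleGraph V} (h : IsKTreeOn k t G) :
    ∀ a ∈ t, k ≤ (nbrs t G a).card := by
  induction h with
  | base s G hc hadj => exact fun a ha => (nbrs_card_of_complete (.base s G hc hadj) hc ha).ge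
  | step s H v c G hH hv hcs hck hcl hadj ih =>
    have e : IsExt k s H v c G := ⟨hH, hv, hcs, hck, hcl, hadj⟩
    intro a ha
    rcases Finset.mem_insert.1 ha with rfl | ha
    · rw [e.nbrs_new, hck]
    · by_cases hac : a ∈ c
      · rw [e.nbrs_mem hac]
        have := ih a ha
        omega
      · rw [e.nbrs_notMem ha hac]
        exact ih a ha

namespace IsExt

variable {s c : Finset V} {H G : SimpleGraph V} {v : V}

/-- The ends of the extension are the new vertex and the old ends outside the clique. -/
theorem mem_ends_iff (e : IsExt k s H v c G) {a : V} :
    a ∈ ends k (insert v s) G ↔ a = v ∨ (a ∈ ends k s H ∧ a ∉ c) := by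
  rw [mem_ends, mem_ends]
  by_cases hav : a = v
  · subst hav
    simp [e.nbrs_new, e.card]
  · by_cases has : a ∈ s
    · by_cases hac : a ∈ c
      · have h1 := e.nbrs_mem hac
        have h2 := e.tree.le_degree a has
        simp only [hav, hac, not_true, and_false, or_false, iff_false, not_and]
        omega
      · simp [e.nbrs_notMem has hac, hav, has, hac]
    · simp [hav, has]

/-- If the smaller tree is `K_{k+1}`, the clique misses exactly one vertex. -/
theorem exists_sdiff (e : IsExt k s H v c G) (hs : s.card = k + 1) :
    ∃ x, x ∈ s ∧ x ∉ c ∧ ∀ y ∈ s, y ∉ c → y = x := by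
  have h : (s \ c).card = 1 := by
    have := Finset.card_sdiff_add_card_eq_card e.sub
    have := e.card
    omega
  obtain ⟨x, hx⟩ := Finset.card_eq_one.1 h
  have hm : ∀ y, y ∈ s ∧ y ∉ c ↔ y = x := by
    intro y
    rw [← Finset.mem_sdiff, hx, Finset.mem_singleton]
  exact ⟨x, ((hm x).2 rfl).1, ((hm x).2 rfl).2, fun y h1 h2 => (hm y).1 ⟨h1, h2⟩⟩

end IsExt

/-! ### The ends of a `k`-tree -/

theorem ends_not_adj {t : Finset V} {G : SimpleGraph V} (h : IsKTreeOn k t G)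
    (ht : k + 2 ≤ t.card) : ∀ a ∈ ends k t G, ∀ b ∈ ends k t G, ¬ G.Adj a b := by
  induction h with
  | base s G hc hadj => omega
  | step s H v c G hH hv hcs hck hcl hadj ih =>
    have e : IsExt k s H v c G := ⟨hH, hv, hcs, hck, hcl, hadj⟩
    intro a ha b hb hab
    rw [e.mem_ends_iff] at ha hb
    rw [hadj] at hab
    have hsupp := hH.supp a b
    rcases Nat.lt_or_ge s.card (k + 2) with hs | hs
    · obtain ⟨x, -, -, hx⟩ := e.exists_sdiff (by have := hH.le_card; omega)
      have := H.ne_of_adj (a := a) (b := b)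
      have h1 := hx a
      have h2 := hx b
      grind
    · have := ih hs a
      have hvc : v ∉ c := fun h => hv (hcs h)
      grind

theorem exists_two_ends {t : Finset V} {G : SimpleGraph V} (h : IsKTreeOn k t G)
    (ht : k + 2 ≤ t.card) : ∃ a ∈ ends k t G, ∃ b ∈ ends k t G, a ≠ b := by
  induction h with
  | base s G hc hadj => omega
  | step s H v c G hH hv hcs hck hcl hadj ih =>
    have e : IsExt k s H v c G := ⟨hH, hv, hcs, hck, hcl, hadj⟩
    -- It suffices to find an end of `H` outside `c`; the new vertex is the other end.
    suffices hsuff : ∃ a ∈ ends k s H, a ∉ c by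
      obtain ⟨a, ha, hac⟩ := hsuff
      refine ⟨v, e.mem_ends_iff.2 (.inl rfl), a, e.mem_ends_iff.2 (.inr ⟨ha, hac⟩), ?_⟩
      rintro rfl
      exact hv (mem_ends.1 ha).1
    rcases Nat.lt_or_ge s.card (k + 2) with hs | hs
    · have hs' : s.card = k + 1 := by have := hH.le_card; omega
      obtain ⟨x, hxs, hxc, -⟩ := e.exists_sdiff hs'
      exact ⟨x, mem_ends.2 ⟨hxs, nbrs_card_of_complete hH hs' hxs⟩, hxc⟩
    · obtain ⟨a, ha, b, hb, hab⟩ := ih hs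
      by_contra! hcon
      exact ends_not_adj hH hs a ha b hb (hcl a (hcon a ha) b (hcon b hb) hab)

/-- Any end of a `k`-tree on at least `k + 2` vertices can be taken to be the last vertex of a
construction of the `k`-tree. -/
theorem exists_ext_of_end {t : Finset V} {G : SimpleGraph V} (h : IsKTreeOn k t G)
    (ht : k + 2 ≤ t.card) :
    ∀ u ∈ ends k t G, ∃ s H c, IsExt k s H u c G ∧ t = insert u s := by
  induction h with
  | base s G hc hadj => omega
  | step s H v c G hH hv hcs hck hcl hadj ih =>
    have e : IsExt k s H v c G := ⟨hH, hv, hcs, hck, hcl, hadj⟩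
    intro u hu
    rcases e.mem_ends_iff.1 hu with rfl | ⟨hu, huc⟩
    · exact ⟨s, H, c, e, rfl⟩
    have hus := (mem_ends.1 hu).1
    have huv : u ≠ v := by rintro rfl; exact hv hus
    rcases Nat.lt_or_ge s.card (k + 2) with hs | hs
    · -- `H` is complete on `c ∪ {u}`, so `u` and `v` play symmetric roles.
      have hs' : s.card = k + 1 := by have := hH.le_card; omega
      obtain ⟨x, hxs, hxc, hx⟩ := e.exists_sdiff hs'
      obtain rfl := hx u hus huc
      have hcomp := hH.complete hs'
      have hsc : ∀ y, y ∈ s ↔ y = u ∨ y ∈ c := by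
        intro y
        have := hx y
        have := @hcs y
        grind
      have hvc : v ∉ c := fun h => hv (hcs h)
      let K : SimpleGraph V :=
        { Adj := fun a b => a ≠ b ∧ a ∈ insert v c ∧ b ∈ insert v c
          symm := ⟨fun a b h => ⟨h.1.symm, h.2.2, h.2.1⟩⟩
          loopless := ⟨fun a h => h.1 rfl⟩ }
      have hK : ∀ a b, K.Adj a b ↔ a ≠ b ∧ a ∈ insert v c ∧ b ∈ insert v c := fun a b => Iff.rfl
      refine ⟨insert v c, K, c, ⟨.base _ K ?_ hK, ?_, Finset.subset_insert _ _, hck, ?_, ?_⟩, ?_⟩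
      · rw [Finset.card_insert_of_notMem hvc, hck]
      · simp [huv, huc]
      · intro a ha b hb hab
        simp [hK, ha, hb, hab]
      · intro a b
        rw [hadj, hcomp, hK, hsc, hsc, Finset.mem_insert, Finset.mem_insert]
        grind
      · ext y
        simp only [Finset.mem_insert, hsc]
        tauto
    · -- `u` is also an end of `H`; remove it there and attach `v` afterwards.
      obtain ⟨s', H', c', e', rfl⟩ := ih hs u hu
      have hvs' : v ∉ s' := fun h => hv (Finset.mem_insert_of_mem h)
      have hcs' : c ⊆ s' := by
        intro y hy
        rcases Finset.mem_insert.1 (hcs hy) with rfl | h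
        · exact absurd hy huc
        · exact h
      have hus' := e'.notMem
      have hvc' : v ∉ c' := fun h => hvs' (e'.sub h)
      let K : SimpleGraph V :=
        { Adj := fun a b => H'.Adj a b ∨ (a = v ∧ b ∈ c) ∨ (b = v ∧ a ∈ c)
          symm := ⟨fun a b h => by rw [H'.adj_comm]; tauto⟩
          loopless := ⟨fun a h => by
            have hvc : v ∉ c := fun h => hvs' (hcs' h)
            have := H'.ne_of_adj (a := a) (b := a)
            grind⟩ }
      have hK : ∀ a b, K.Adj a b ↔ H'.Adj a b ∨ (a = v ∧ b ∈ c) ∨ (b = v ∧ a ∈ c) :=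
        fun a b => Iff.rfl
      refine ⟨insert v s', K, c', ⟨.step s' H' v c K e'.tree hvs' hcs' hck ?_ hK, ?_, ?_, e'.card,
        ?_, ?_⟩, Finset.insert_comm _ _ _⟩
      · intro a ha b hb hab
        have h1 := (e'.adj a b).1 (hcl a ha b hb hab)
        grind
      · simp [huv, hus']
      · exact e'.sub.trans (Finset.subset_insert _ _)
      · intro a ha b hb hab
        exact .inl (e'.clique a ha b hb hab)
      · intro a b
        rw [hadj, hK, e'.adj]
        tauto

/-! ### Forcing from an end -/

/-- If `G` has no edges beyond those of `H` except at the vertex `v`, which is isolated in `H` and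
black in `G`, then forcing in `H` carries over to `G`. -/
theorem ZFDerived.transfer {G H : SimpleGraph V} {B B' : Set V} {v : V}
    (hle : ∀ a b, H.Adj a b → G.Adj a b)
    (hnew : ∀ a b, G.Adj a b → a ≠ v → b ≠ v → H.Adj a b)
    (hiso : ∀ a, ¬ H.Adj v a)
    (hv : ZFDerived G B v) (hB : ∀ a ∈ B', ZFDerived G B a) {a : V} (h : ZFDerived H B' a) :
    ZFDerived G B a := by
  induction h with
  | init a ha => exact hB a ha
  | force u a _ hua _ ihu ih =>
    refine .force u a ihu (hle u a hua) fun w huw hwa => ?_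
    by_cases hwv : w = v
    · exact hwv ▸ hv
    · refine ih w (hnew u w huw ?_ hwv) hwa
      rintro rfl
      exact hiso a hua

/-- In a `k`-tree with at most two ends, and in `K_{k+1}`, the closed neighbourhood of an end
forces every vertex. -/
theorem derived_of_end (hk : 1 ≤ k) (n : ℕ) : ∀ (t : Finset V) (G : SimpleGraph V), t.card = n →
    IsKTreeOn k t G → (t.card = k + 1 ∨ (ends k t G).card ≤ 2) →
    ∀ v ∈ ends k t G, ∀ a ∈ t, ZFDerived G (insert v {x | G.Adj v x}) a := by
  induction n with
  | zero =>
    intro t G ht h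
    have := h.le_card
    omega
  | succ n ih =>
    intro t G htn h hends v hv a ha
    by_cases ht : t.card = k + 1
    · apply ZFDerived.init
      have := h.complete ht v a
      have := (mem_ends.1 hv).1
      simp only [Set.mem_insert_iff, Set.mem_ofPred_eq]
      grind
    replace hends := hends.resolve_left ht
    obtain ⟨s, H, c, e, rfl⟩ := exists_ext_of_end h (by have := h.le_card; omega) v hv
    have hcard := Finset.card_insert_of_notMem e.notMem
    have hvc : v ∉ c := fun h => e.notMem (e.sub h)
    obtain ⟨hs, u, huc, hu⟩ :
        (s.card = k + 1 ∨ (ends k s H).card ≤ 2) ∧ ∃ u ∈ c, u ∈ ends k s H := by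
      by_cases hs : s.card = k + 1
      · refine ⟨.inl hs, ?_⟩
        obtain ⟨u, hu⟩ : c.Nonempty := by
          rw [← Finset.card_pos, e.card]; omega
        exact ⟨u, hu, mem_ends.2 ⟨e.sub hu, nbrs_card_of_complete e.tree hs (e.sub hu)⟩⟩
      · have hs2 : k + 2 ≤ s.card := by have := e.tree.le_card; omega
        have h1 : (ends k s H \ c).card ≤ 1 := by
          have hsub : ends k s H \ c ⊆ (ends k (insert v s) G).erase v := by
            intro x hx
            rw [Finset.mem_sdiff] at hx
            refine Finset.mem_erase.2 ⟨?_, e.mem_ends_iff.2 (.inr hx)⟩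
            rintro rfl
            exact e.notMem (mem_ends.1 hx.1).1
          have := Finset.card_le_card hsub
          rw [Finset.card_erase_of_mem hv] at this
          omega
        have h2 : (ends k s H ∩ c).card ≤ 1 := by
          rw [Finset.card_le_one]
          intro x hx y hy
          rw [Finset.mem_inter] at hx hy
          by_contra hxy
          exact ends_not_adj e.tree hs2 x hx.1 y hy.1 (e.clique x hx.2 y hy.2 hxy)
        have h3 : 1 < (ends k s H).card :=
          Finset.one_lt_card.2 (exists_two_ends e.tree hs2)
        have h4 := Finset.card_sdiff_add_card_inter (ends k s H) c
        refine ⟨.inr (by omega), ?_⟩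
        obtain ⟨u, hu⟩ : (ends k s H ∩ c).Nonempty := by
          rw [← Finset.card_pos]; omega
        exact ⟨u, (Finset.mem_inter.1 hu).2, (Finset.mem_inter.1 hu).1⟩
    set B : Set V := insert v {x | G.Adj v x} with hB
    have hvB : ZFDerived G B v := .init v (Set.mem_insert _ _)
    have hcB : ∀ x ∈ c, ZFDerived G B x := fun x hx =>
      .init x (Set.mem_insert_of_mem _ ((e.adj v x).2 (.inr (.inl ⟨rfl, hx⟩))))
    rcases Finset.mem_insert.1 ha with rfl | has
    · exact hvB
    refine ZFDerived.transfer (fun a b hab => (e.adj a b).2 (.inl hab))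
      (fun a b hab hav hbv => ?_) (fun a hva => e.notMem (e.tree.supp v a hva).1) hvB ?_
      (ih s H (by omega) e.tree hs u hu a has)
    · have := (e.adj a b).1 hab
      tauto
    · rintro y (rfl | hy)
      · exact hcB y huc
      · by_cases hyc : y ∈ c
        · exact hcB y hyc
        have hy : H.Adj u y := hy
        -- Both sides have `k - 1` elements: `y` is the only neighbour of `u` in `H` outside `c`.
        have heq : c.erase u = (nbrs s H u).erase y := by
          apply Finset.eq_of_subset_of_card_le
          · intro x hx
            obtain ⟨hxu, hxc⟩ := Finset.mem_erase.1 hx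
            refine Finset.mem_erase.2 ⟨?_, mem_nbrs.2 ⟨e.sub hxc, e.clique u huc x hxc hxu.symm⟩⟩
            rintro rfl
            exact hyc hxc
          · rw [Finset.card_erase_of_mem huc, e.card,
              Finset.card_erase_of_mem (mem_nbrs.2 ⟨(e.tree.supp u y hy).2, hy⟩),
              (mem_ends.1 hu).2]
        refine .force u y (hcB u huc) ((e.adj u y).2 (.inl hy)) fun w huw hwy => ?_
        rcases (e.adj u w).1 huw with h | ⟨rfl, -⟩ | ⟨rfl, -⟩
        · have hw : w ∈ (nbrs s H u).erase y :=
            Finset.mem_erase.2 ⟨hwy, mem_nbrs.2 ⟨(e.tree.supp u w h).2, h⟩⟩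
          rw [← heq] at hw
          exact hcB w (Finset.mem_of_mem_erase hw)
        · exact absurd huc hvc
        · exact hvB

end KTree

/-! ### The zero forcing number -/

theorem vertDegree_eq {V : Type} [Fintype V] [DecidableEq V] (G : SimpleGraph V) (v : V) :
    vertDegree G v = (nbrs Finset.univ G v).card := by
  rw [vertDegree, ← Set.ncard_coe_finset]
  congr 1
  ext u
  simp [mem_nbrs]

/-- The zero forcing number of a `k`-path is at most `k`. -/
theorem zeroForcingNumber_kPath_le {V : Type} [Fintype V] [DecidableEq V]
    (k : ℕ) (hk : 1 ≤ k) (G : SimpleGraph V) (hG : IsKPath k G)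
    (hn : k + 1 ≤ Fintype.card V) :
    zeroForcingNumber G ≤ k := by
  obtain ⟨hT, hP⟩ := hG
  have hT : IsKTreeOn k Finset.univ G := hT
  have hset : {v : V | vertDegree G v = k} = ↑(ends k Finset.univ G) := by
    ext v
    simp [mem_ends, vertDegree_eq]
  rw [hset, Set.ncard_coe_finset] at hP
  obtain ⟨v, hv⟩ : (ends k Finset.univ G).Nonempty := by
    rcases hP with h | h
    · obtain ⟨v⟩ : Nonempty V := Fintype.card_pos_iff.1 (by omega)
      exact ⟨v, mem_ends.2 ⟨Finset.mem_univ v, nbrs_card_of_complete hT h (Finset.mem_univ v)⟩⟩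
    · rw [← Finset.card_pos]; omega
  have hall := derived_of_end hk _ _ G rfl hT (hP.imp id (fun h => h.le)) v hv
  have hdeg := (mem_ends.1 hv).2
  obtain ⟨y, hy⟩ : (nbrs Finset.univ G v).Nonempty := by
    rw [← Finset.card_pos]; omega
  have hyv : G.Adj v y := (mem_nbrs.1 hy).2
  have hvN : v ∉ (nbrs Finset.univ G v).erase y := by simp [mem_nbrs]
  -- The closed neighbourhood of `v` without `y`: the vertex `v` forces `y` in the first step.
  refine Nat.sInf_le ⟨insert v ((nbrs Finset.univ G v).erase y), fun a => ?_, ?_⟩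
  · set B : Set V := ↑(insert v ((nbrs Finset.univ G v).erase y)) with hB
    have hvB : ZFDerived G B v := .init v (by simp [hB])
    have hw : ∀ w, G.Adj v w → w ≠ y → ZFDerived G B w := fun w hvw hwy =>
      .init w (by simp [hB, mem_nbrs, hvw, hwy])
    have hcl : ∀ x ∈ (insert v {x | G.Adj v x} : Set V), ZFDerived G B x := by
      rintro x (rfl | hx)
      · exact hvB
      · by_cases hxy : x = y
        · exact hxy ▸ .force v y hvB hyv hw
        · exact hw x hx hxy
    have ha := hall a (Finset.mem_univ a)
    induction ha with
    | init x hx => exact hcl x hx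
    | force u x _ hux _ ihu ih => exact .force u x ihu hux ih
  · rw [Finset.card_insert_of_notMem hvN, Finset.card_erase_of_mem hy, hdeg]
    omega
end
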